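/- Assume (L,N) is graphically admissible. Then there exists a minimum set O_m satisfying the graphical adjustment criterion for A,Y,L,N in G such that, for every minimum set Z satisfying the criterion: O_m ⊴_{H^1} Z, Y and Z\O_m are d-separated by {A} ∪ O_m in G, and A and O_m\Z are d-separated by Z in G. -/

import Mathlib

open Relation Set

namespace CausalGraph

variable {V : Type*} [Fintype V] [DecidableEq V]

/-- `p` is a path in the undirected sense from `u` to `v` along adjacency `Adj`:
a nonempty list of pairwise distinct vertices, consecutive ones adjacent,
starting at `u` and ending at `v`. -/
def IsPath (Adj : V → V → Prop) (u v : V) (p : List V) : Prop :=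
  List.Chain' Adj p ∧ p.head? = some u ∧ p.getLast? = some v ∧ p.Nodup

/-- Ancestors of `S` in the digraph `D` (every vertex is an ancestor of itself). -/
def anc (D : V → V → Prop) (S : Set V) : Set V :=
  {u | ∃ v ∈ S, Relation.ReflTransGen D u v}

/-- Descendants of `S` in the digraph `D` (every vertex is a descendant of itself). -/
def desc (D : V → V → Prop) (S : Set V) : Set V :=
  {u | ∃ v ∈ S, Relation.ReflTransGen D v u}

/-- Parents of vertices of `S` in the digraph `D`. -/
def parents (D : V → V → Prop) (S : Set V) : Set V :=
  {u | ∃ v ∈ S, D u v}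

/-- The digraph `D` is acyclic. -/
def Acyclic (D : V → V → Prop) : Prop :=
  ∀ u v, D u v → ¬ Relation.ReflTransGen D v u

/-- Vertices other than `A` lying on a directed path from `A` to `Y`. -/
def cn (D : V → V → Prop) (A Y : V) : Set V :=
  {v | v ≠ A ∧ Relation.ReflTransGen D A v ∧ Relation.ReflTransGen D v Y}

/-- The forbidden set. -/
def forb (D : V → V → Prop) (A Y : V) : Set V :=
  desc D (cn D A Y) ∪ {A}

/-- Proper back-door graph: delete every edge from `A` into `cn D A Y`. -/
def pbd (D : V → V → Prop) (A Y : V) : V → V → Prop :=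
  fun u v => D u v ∧ ¬(u = A ∧ v ∈ cn D A Y)

/-- `y` is an interior vertex of the list `p` with neighbours `x` and `z` on the path. -/
def InteriorAt (p : List V) (x y z : V) : Prop :=
  ∃ s t : List V, p = s ++ x :: y :: z :: t

/-- The path `p` is blocked by `Z` in the digraph `D`: some interior non-collider
lies in `Z`, or some interior collider has no descendant in `Z`. -/
def Blocked (D : V → V → Prop) (Z : Set V) (p : List V) : Prop :=
  (∃ x y z, InteriorAt p x y z ∧ ¬(D x y ∧ D z y) ∧ y ∈ Z) ∨
  (∃ x y z, InteriorAt p x y z ∧ (D x y ∧ D z y) ∧ ∀ d ∈ desc D {y}, d ∉ Z)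

/-- d-separation of `S` and `T` given `Z` in the digraph `D`. -/
def DSep (D : V → V → Prop) (S T Z : Set V) : Prop :=
  ∀ s ∈ S, ∀ t ∈ T, ∀ p : List V,
    IsPath (fun a b => D a b ∨ D b a) s t p → Blocked D Z p

/-- Moral graph of the subgraph of the digraph `D` induced on `Vs`. -/
def moral (D : V → V → Prop) (Vs : Set V) : SimpleGraph V :=
  SimpleGraph.fromRel (fun u v =>
    u ∈ Vs ∧ v ∈ Vs ∧ (D u v ∨ D v u ∨ ∃ w ∈ Vs, D u w ∧ D v w))

/-- Separation in an undirected graph: every path from `S` to `T` meets `W`. -/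
def USep (H : SimpleGraph V) (S T W : Set V) : Prop :=
  ∀ s ∈ S, ∀ t ∈ T, ∀ p : List V, IsPath H.Adj s t p → ∃ z ∈ W, z ∈ p

/-- `Z` is an `A`–`Y` cut in an undirected graph `H` with vertex set `Vs`. -/
def IsCut (Vs : Set V) (H : SimpleGraph V) (A Y : V) (Z : Set V) : Prop :=
  Z ⊆ Vs ∧ Z ∩ {A, Y} = ∅ ∧ ∀ p : List V, IsPath H.Adj A Y p → ∃ z ∈ Z, z ∈ p

def MinimalCut (Vs : Set V) (H : SimpleGraph V) (A Y : V) (Z : Set V) : Prop :=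
  IsCut Vs H A Y Z ∧ ∀ Z' ⊂ Z, ¬ IsCut Vs H A Y Z'

def MinimumCut (Vs : Set V) (H : SimpleGraph V) (A Y : V) (Z : Set V) : Prop :=
  IsCut Vs H A Y Z ∧ ∀ Z', IsCut Vs H A Y Z' → Z.ncard ≤ Z'.ncard

/-- Connected component of `y` in `H` restricted to the complement of `U`:
vertices reachable from `y` by paths avoiding `U`. -/
def cc (H : SimpleGraph V) (U : Set V) (y : V) : Set V :=
  {w | ∃ p : List V, IsPath H.Adj y w p ∧ ∀ x ∈ p, x ∉ U}

/-- Boundary of `S` in `H`: vertices outside `S` adjacent to some vertex of `S`. -/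
def bdry (H : SimpleGraph V) (S : Set V) : Set V :=
  {v | v ∉ S ∧ ∃ u ∈ S, H.Adj v u}

/-- The partial order `Z₁ ⊴_H Z₂` between `A`–`Y` cuts. -/
def TLE (H : SimpleGraph V) (A Y : V) (Z₁ Z₂ : Set V) : Prop :=
  USep H {Y} (Z₂ \ Z₁) Z₁ ∧ USep H {A} (Z₁ \ Z₂) Z₂

/-- Ancestors of `{A, Y} ∪ L`. -/
def ancAYL (D : V → V → Prop) (A Y : V) (L : Set V) : Set V :=
  anc D ({A, Y} ∪ L)

/-- The moral graph `H⁰` of the proper back-door graph induced on `an_G({A,Y} ∪ L)`. -/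
def H0 (D : V → V → Prop) (A Y : V) (L : Set V) : SimpleGraph V :=
  moral (pbd D A Y) (ancAYL D A Y L)

/-- The set of vertices removed from `H⁰` when constructing `H¹`. -/
def Ignore (D : V → V → Prop) (A Y : V) (L N : Set V) : Set V :=
  (ancAYL D A Y L \ {A, Y}) ∩ ((Set.univ \ N) ∪ forb D A Y)

/-- Vertex set of `H¹`. -/
def H1verts (D : V → V → Prop) (A Y : V) (L N : Set V) : Set V :=
  ancAYL D A Y L \ Ignore D A Y L N

/-- The non-parametric adjustment efficiency graph `H¹`: delete the vertices of
`Ignore`, join two remaining vertices if they are joined in `H⁰` by a path all of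
whose intermediate vertices are in `Ignore`, and join `A` and `Y` to every vertex
of `L`. -/
def H1 (D : V → V → Prop) (A Y : V) (L N : Set V) : SimpleGraph V :=
  SimpleGraph.fromRel (fun u v =>
    u ∈ H1verts D A Y L N ∧ v ∈ H1verts D A Y L N ∧
      ((∃ p : List V, IsPath (H0 D A Y L).Adj u v p ∧
          ∀ x ∈ p, x ≠ u → x ≠ v → x ∈ Ignore D A Y L N) ∨
        (u = A ∧ v ∈ L) ∨ (u = Y ∧ v ∈ L)))

/-- The graphical adjustment criterion for `A, Y, L, N` in the DAG `D`. -/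
def GAC (D : V → V → Prop) (A Y : V) (L N Z : Set V) : Prop :=
  DSep (pbd D A Y) {A} {Y} Z ∧ Z ∩ forb D A Y = ∅ ∧ L ⊆ Z ∧ Z ⊆ N

def MinimalGAC (D : V → V → Prop) (A Y : V) (L N Z : Set V) : Prop :=
  GAC D A Y L N Z ∧ ∀ Z' ⊂ Z, ¬ GAC D A Y L N Z'

def MinimumGAC (D : V → V → Prop) (A Y : V) (L N Z : Set V) : Prop :=
  GAC D A Y L N Z ∧ ∀ Z', GAC D A Y L N Z' → Z.ncard ≤ Z'.ncard

/-- Graphical admissibility of the pair `(L, N)`. -/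
def Admissible (D : V → V → Prop) (A Y : V) (L N : Set V) : Prop :=
  ∃ Z, GAC D A Y L N Z

end CausalGraph

namespace CausalGraph

/-!
The sets satisfying the adjustment criterion are, up to vertices that can be discarded, the `A`–`Y`
cuts of `H¹`: d-separation is separation in the moral graph of the ancestors, elimination of
`Ignore` preserves separation by the remaining vertices, and the edges added at `L` force a cut to
contain `L`. A cut is best described by the set of vertices on the side of `Y`. The size of the
boundary is submodular in this set, so the sides of the minimum cuts are closed under intersection,
and `Om` is the boundary of the smallest one. This gives the comparison `Om ⊴ Z` in `H¹`. It
transfers to d-separation in `G`, not only in the proper back-door graph, because an open walk from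
`Y` given a set containing `A`, or from `A` to an allowed vertex given a set of allowed vertices,
never uses one of the deleted edges.
-/

section UndirectedGraphs

variable {V : Type*} {H H' : SimpleGraph V} {W W' Z I U : Set V} {a b s u v : V}

/-- The graph `H` with all edges at vertices of `W` removed. The vertices of `W` stay as isolated
vertices, so that vertex deletion does not change the vertex type. -/
def avoiding (H : SimpleGraph V) (W : Set V) : SimpleGraph V :=
  (H.induce Wᶜ).spanningCoe

lemma avoiding_adj : (avoiding H W).Adj a b ↔ H.Adj a b ∧ a ∉ W ∧ b ∉ W := by
  simp [avoiding]

lemma avoiding_le_avoiding (h : ∀ a b, H.Adj a b → a ∉ W → b ∉ W → H'.Adj a b)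
    (hW : W' ⊆ W) : avoiding H W ≤ avoiding H' W' := fun a b hab => by
  obtain ⟨hab, ha, hb⟩ := avoiding_adj.1 hab
  exact avoiding_adj.2 ⟨h a b hab ha hb, fun h => ha (hW h), fun h => hb (hW h)⟩

lemma avoiding_inter_of_support_subset (h : H.support ⊆ U) :
    avoiding H (W ∩ U) = avoiding H W := by
  ext a b
  simp only [avoiding_adj, mem_inter_iff, not_and]
  exact ⟨fun ⟨hab, ha, hb⟩ =>
      ⟨hab, fun hW => ha hW (h ⟨b, hab⟩), fun hW => hb hW (h ⟨a, hab.symm⟩)⟩,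
    fun ⟨hab, ha, hb⟩ => ⟨hab, fun hW => (ha hW).elim, fun hW => (hb hW).elim⟩⟩

lemma notMem_of_reachable_avoiding (h : (avoiding H W).Reachable u v) (hu : u ∉ W) : v ∉ W := by
  rcases (SimpleGraph.reachable_iff_reflTransGen u v).1 h |>.cases_tail with rfl | ⟨w, -, hwv⟩
  · exact hu
  · exact (avoiding_adj.1 hwv).2.2

lemma mem_cc_iff_reachable (hu : u ∉ W) : v ∈ cc H W u ↔ (avoiding H W).Reachable u v := by
  classical
  constructor
  · rintro ⟨p, ⟨hchain, hhead, hlast, -⟩, hW⟩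
    obtain ⟨hne, rfl⟩ := List.mem_getLast?_eq_getLast hlast
    rw [← List.head_of_mem_head? hhead]
    exact ⟨SimpleGraph.Walk.ofSupport p hne <| hchain.imp_of_mem_imp fun a b ha hb hab =>
      avoiding_adj.2 ⟨hab, hW a ha, hW b hb⟩⟩
  · intro h
    obtain ⟨q, hq⟩ := h.exists_isPath
    refine ⟨q.support, ⟨q.isChain_adj_support.imp fun _ _ h => (avoiding_adj.1 h).1, ?_, ?_,
      hq.support_nodup⟩, fun x hx => ?_⟩
    · rw [List.head?_eq_some_head q.support_ne_nil, q.head_support]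
    · rw [List.getLast?_eq_some_getLast q.support_ne_nil, q.getLast_support]
    · exact notMem_of_reachable_avoiding ⟨q.takeUntil x hx⟩ hu

lemma uSep_singleton_left_iff {T : Set V} : USep H {s} T W ↔ ∀ t ∈ T, t ∉ cc H W s := by
  simp only [USep, cc, mem_singleton_iff, forall_eq, mem_ofPred_eq, not_exists, not_and, not_forall,
    not_not, exists_prop, and_comm]

/-- Elimination of the vertex set `I` from `H`, as in the construction of `H¹` from `H⁰`: the
vertices of `I` are removed and two remaining vertices are joined if some walk of `H` between them
has all its intermediate vertices in `I`. -/
def eliminate (H : SimpleGraph V) (I : Set V) : SimpleGraph V where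
  Adj a b := a ≠ b ∧ a ∉ I ∧ b ∉ I ∧ (avoiding H (I ∪ {a, b})ᶜ).Reachable a b
  symm := ⟨fun a b ⟨hab, ha, hb, h⟩ => ⟨hab.symm, hb, ha, by rw [pair_comm]; exact h.symm⟩⟩
  loopless := ⟨fun _ h => h.1 rfl⟩

lemma support_eliminate_subset : (eliminate H I).support ⊆ H.support \ I := by
  rintro u ⟨v, huv, hu, -, h⟩
  rcases (SimpleGraph.reachable_iff_reflTransGen u v).1 h |>.cases_head with rfl | ⟨w, huw, -⟩
  exacts [(huv rfl).elim, ⟨⟨w, (avoiding_adj.1 huw).1⟩, hu⟩]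

lemma reachable_avoiding_eliminate (hu : u ∉ I) (hv : v ∉ I) (huZ : u ∉ Z)
    (h : (avoiding H Z).Reachable u v) : (avoiding (eliminate H I) Z).Reachable u v := by
  suffices ∀ b, ReflTransGen (avoiding H Z).Adj u b → ∃ w, w ∉ I ∧ w ∉ Z ∧
      (avoiding (eliminate H I) Z).Reachable u w ∧ (avoiding H (I ∪ {w})ᶜ).Reachable w b by
    obtain ⟨w, -, -, huw, hwv⟩ := this v ((SimpleGraph.reachable_iff_reflTransGen u v).1 h)
    have hv' := notMem_of_reachable_avoiding hwv (by simp)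
    obtain rfl : v = w := by simpa [hv] using hv'
    exact huw
  intro b hub
  induction hub with
  | refl => exact ⟨u, hu, huZ, .rfl, .rfl⟩
  | @tail b c _ hbc ih =>
    obtain ⟨w, hw, hwZ, huw, hwb⟩ := ih
    obtain ⟨hbc, -, hcZ⟩ := avoiding_adj.1 hbc
    have hb := notMem_of_reachable_avoiding hwb (by simp)
    by_cases hc : c ∈ I
    · exact ⟨w, hw, hwZ, huw, hwb.trans (avoiding_adj.2 ⟨hbc, hb, by simp [hc]⟩).reachable⟩
    refine ⟨c, hc, hcZ, ?_, .rfl⟩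
    rcases eq_or_ne w c with rfl | hwc
    · exact huw
    have hwb' : (avoiding H (I ∪ {w, c})ᶜ).Reachable w b :=
      hwb.mono (avoiding_le_avoiding (fun _ _ h _ _ => h) (by gcongr; simp))
    have hbc' : (avoiding H (I ∪ {w, c})ᶜ).Adj b c :=
      avoiding_adj.2 ⟨hbc, notMem_of_reachable_avoiding hwb' (by simp), by simp⟩
    have hwc' : (eliminate H I).Adj w c := ⟨hwc, hw, hc, hwb'.trans hbc'.reachable⟩
    exact huw.trans (avoiding_adj.2 ⟨hwc', hwZ, hcZ⟩).reachable

lemma reachable_avoiding_of_eliminate (hI : Disjoint I Z)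
    (h : (avoiding (eliminate H I) Z).Reachable u v) : (avoiding H Z).Reachable u v := by
  rw [SimpleGraph.reachable_iff_reflTransGen] at h
  induction h with
  | refl => rfl
  | @tail a b _ hab ih =>
    obtain ⟨⟨-, -, -, hab⟩, ha, hb⟩ := avoiding_adj.1 hab
    refine ih.trans (hab.mono (avoiding_le_avoiding (fun _ _ h _ _ => h) ?_))
    rintro z hz (hzI | rfl | rfl)
    exacts [hI.notMem_of_mem_right hz hzI, ha hz, hb hz]

end UndirectedGraphs

section MinimumCuts

variable {V : Type*} {H : SimpleGraph V} {A Y : V} {S U Z : Set V}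

lemma exists_isLeast_minimizers {α : Type*} [Lattice α] [Finite α] {f : α → ℕ} {P : Set α}
    (hf : ∀ s t, f (s ⊓ t) + f (s ⊔ t) ≤ f s + f t) (hinf : InfClosed P) (hsup : SupClosed P)
    (hP : P.Nonempty) : ∃ s, IsLeast {s ∈ P | ∀ t ∈ P, f s ≤ f t} s := by
  obtain ⟨s, ⟨hsP, hs⟩, hmin⟩ :=
    (toFinite {s ∈ P | ∀ t ∈ P, f s ≤ f t}).exists_minimal (exists_min_image P f P.toFinite hP)
  refine ⟨s, ⟨hsP, hs⟩, fun t ⟨htP, ht⟩ => ?_⟩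
  have hst : f (s ⊓ t) ≤ f s := by have := hf s t; have := ht _ (hsup hsP htP); omega
  exact (hmin ⟨hinf hsP htP, fun r hr => hst.trans (hs r hr)⟩ inf_le_left).trans inf_le_right

lemma ncard_bdry_inter_add_ncard_bdry_union_le [Finite V] (H : SimpleGraph V) (S T : Set V) :
    (bdry H (S ∩ T)).ncard + (bdry H (S ∪ T)).ncard ≤ (bdry H S).ncard + (bdry H T).ncard := by
  have hunion : bdry H (S ∩ T) ∪ bdry H (S ∪ T) ⊆ bdry H S ∪ bdry H T := by
    rintro v (⟨hv, u, ⟨huS, huT⟩, huv⟩ | ⟨hv, u, huS | huT, huv⟩)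
    · by_cases hvS : v ∈ S
      exacts [.inr ⟨fun hvT => hv ⟨hvS, hvT⟩, u, huT, huv⟩, .inl ⟨hvS, u, huS, huv⟩]
    exacts [.inl ⟨fun h => hv (.inl h), u, huS, huv⟩, .inr ⟨fun h => hv (.inr h), u, huT, huv⟩]
  have hinter : bdry H (S ∩ T) ∩ bdry H (S ∪ T) ⊆ bdry H S ∩ bdry H T := by
    rintro v ⟨⟨-, u, ⟨huS, huT⟩, huv⟩, hv, -⟩
    exact ⟨⟨fun h => hv (.inl h), u, huS, huv⟩, fun h => hv (.inr h), u, huT, huv⟩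
  rw [← ncard_union_add_ncard_inter (bdry H (S ∩ T)), ← ncard_union_add_ncard_inter (bdry H S)]
  gcongr <;> exact toFinite _

/-- `S` is a possible `Y`-side of an `A`–`Y` cut in `H`, the cut being the boundary of `S`. -/
def IsSide (H : SimpleGraph V) (A Y : V) (S : Set V) : Prop :=
  Y ∈ S ∧ A ∉ S ∧ A ∉ bdry H S

lemma infClosed_isSide : InfClosed {S | IsSide H A Y S} :=
  fun _ ⟨hYS, hAS, hS⟩ _ ⟨hYT, _, _⟩ =>
    ⟨⟨hYS, hYT⟩, fun h => hAS h.1, fun ⟨_, u, hu, hAu⟩ => hS ⟨hAS, u, hu.1, hAu⟩⟩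

lemma supClosed_isSide : SupClosed {S | IsSide H A Y S} :=
  fun _ ⟨hYS, hAS, hS⟩ _ ⟨_, hAT, hT⟩ => ⟨.inl hYS, not_or.2 ⟨hAS, hAT⟩, fun ⟨_, u, hu, hAu⟩ =>
    hu.elim (fun hu => hS ⟨hAS, u, hu, hAu⟩) fun hu => hT ⟨hAT, u, hu, hAu⟩⟩

lemma cc_bdry_subset (hY : Y ∈ S) : cc H (bdry H S) Y ⊆ S := by
  intro v hv
  rw [mem_cc_iff_reachable fun h => h.1 hY, SimpleGraph.reachable_iff_reflTransGen] at hv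
  induction hv with
  | refl => exact hY
  | @tail b c _ hbc hb =>
    obtain ⟨hbc, -, hc⟩ := avoiding_adj.1 hbc
    by_contra hcS
    exact hc ⟨hcS, b, hb, hbc.symm⟩

lemma bdry_cc_subset (hY : Y ∉ Z) : bdry H (cc H Z Y) ⊆ Z := by
  rintro v ⟨hv, u, hu, hvu⟩
  rw [mem_cc_iff_reachable hY] at hv hu
  by_contra hvZ
  have huZ := notMem_of_reachable_avoiding hu hY
  exact hv (hu.trans (avoiding_adj.2 ⟨hvu.symm, huZ, hvZ⟩).reachable)

lemma isCut_iff : IsCut U H A Y Z ↔ Z ⊆ U ∧ A ∉ Z ∧ Y ∉ Z ∧ A ∉ cc H Z Y := by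
  have hsep : (∀ p, IsPath H.Adj A Y p → ∃ z ∈ Z, z ∈ p) ↔ Y ∉ cc H Z A := by
    simpa only [USep, mem_singleton_iff, forall_eq] using uSep_singleton_left_iff (T := {Y})
  have hswap (hA : A ∉ Z) (hY : Y ∉ Z) : Y ∈ cc H Z A ↔ A ∈ cc H Z Y := by
    rw [mem_cc_iff_reachable hA, mem_cc_iff_reachable hY, SimpleGraph.reachable_comm]
  rw [IsCut, hsep, ← disjoint_iff_inter_eq_empty, disjoint_insert_right, disjoint_singleton_right]
  grind

lemma IsSide.isCut_bdry (hS : IsSide H A Y S) (hU : H.support ⊆ U) : IsCut U H A Y (bdry H S) :=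
  isCut_iff.2 ⟨fun _ ⟨_, u, _, huv⟩ => hU ⟨u, huv⟩, hS.2.2, fun h => h.1 hS.1,
    fun h => hS.2.1 (cc_bdry_subset hS.1 h)⟩

lemma IsCut.isSide_cc (hZ : IsCut U H A Y Z) : IsSide H A Y (cc H Z Y) := by
  obtain ⟨-, hA, hY, hsep⟩ := isCut_iff.1 hZ
  exact ⟨(mem_cc_iff_reachable hY).2 .rfl, hsep, fun h => hA (bdry_cc_subset hY h)⟩

lemma IsCut.tle_bdry (hZ : IsCut U H A Y Z) (hY : Y ∈ S) (hS : S ⊆ cc H Z Y) :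
    TLE H A Y (bdry H S) Z := by
  obtain ⟨-, hAZ, hYZ, hsep⟩ := isCut_iff.1 hZ
  refine ⟨uSep_singleton_left_iff.2 fun z hz hzY => ?_,
    uSep_singleton_left_iff.2 fun o ho hoA => ?_⟩
  · have hYz := (mem_cc_iff_reachable hYZ).1 (hS (cc_bdry_subset hY hzY))
    exact notMem_of_reachable_avoiding hYz hYZ hz.1
  · obtain ⟨⟨-, u, huS, hou⟩, hoZ⟩ := ho
    have hAo := (mem_cc_iff_reachable hAZ).1 hoA
    have hYu := (mem_cc_iff_reachable hYZ).1 (hS huS)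
    have huo := avoiding_adj.2 ⟨hou.symm, notMem_of_reachable_avoiding hYu hYZ, hoZ⟩
    exact hsep ((mem_cc_iff_reachable hYZ).2 ((hYu.trans huo.reachable).trans hAo.symm))

lemma exists_minimumCut_tle [Finite V] (hU : H.support ⊆ U) (hcut : ∃ Z, IsCut U H A Y Z) :
    ∃ O, MinimumCut U H A Y O ∧ ∀ Z, MinimumCut U H A Y Z → TLE H A Y O Z := by
  have hle {Z} (hZ : IsCut U H A Y Z) : (bdry H (cc H Z Y)).ncard ≤ Z.ncard :=
    ncard_le_ncard (bdry_cc_subset (isCut_iff.1 hZ).2.2.1)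
  obtain ⟨S, ⟨hS, hmin⟩, hleast⟩ := exists_isLeast_minimizers (f := fun S => (bdry H S).ncard)
    (ncard_bdry_inter_add_ncard_bdry_union_le H) infClosed_isSide supClosed_isSide
    (hcut.elim fun _ hZ => ⟨_, hZ.isSide_cc⟩)
  refine ⟨bdry H S, ⟨hS.isCut_bdry hU, fun Z hZ => (hmin _ hZ.isSide_cc).trans (hle hZ)⟩,
    fun Z hZ => hZ.1.tle_bdry hS.1 (hleast ⟨hZ.1.isSide_cc, fun T hT => ?_⟩)⟩
  exact (hle hZ.1).trans (hZ.2 _ (hT.isCut_bdry hU))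

end MinimumCuts

section DSeparation

variable {V : Type*} {D : V → V → Prop} {Z : Set V} {a b g h s t u v w x y z : V} {l m p : List V}

/-- The middle vertex `y` of the consecutive vertices `x`, `y`, `z` of a walk does not block the
walk: it is an ancestor of `Z` if it is a collider, and it is not in `Z` otherwise. -/
def OpenTriple (D : V → V → Prop) (Z : Set V) (x y z : V) : Prop :=
  (D x y ∧ D z y → y ∈ anc D Z) ∧ (¬(D x y ∧ D z y) → y ∉ Z)

/-- The walk `p`, which may repeat vertices, is not blocked by `Z`. -/
def Active (D : V → V → Prop) (Z : Set V) (p : List V) : Prop :=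
  ∀ x y z, InteriorAt p x y z → OpenTriple D Z x y z

lemma interiorAt_iff_infix : InteriorAt p x y z ↔ [x, y, z] <:+: p := by
  simp [InteriorAt, List.IsInfix, eq_comm]

lemma active_iff_not_blocked : Active D Z p ↔ ¬Blocked D Z p := by
  have hanc (y : V) : (∀ d ∈ desc D {y}, d ∉ Z) ↔ y ∉ anc D Z := by
    simp only [desc, anc, mem_singleton_iff, exists_eq_left, mem_ofPred_eq]
    grind
  simp only [Active, OpenTriple, Blocked, hanc]
  grind

lemma Active.of_infix (hp : Active D Z p) (h : l <:+: p) : Active D Z l := fun x y z hxyz =>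
  hp x y z (interiorAt_iff_infix.2 ((interiorAt_iff_infix.1 hxyz).trans h))

lemma active_cons_cons :
    Active D Z (w :: v :: p) ↔ (∀ u ∈ p.head?, OpenTriple D Z w v u) ∧ Active D Z (v :: p) := by
  simp only [Active, interiorAt_iff_infix, List.infix_cons_iff (l₂ := v :: p),
    List.cons_prefix_cons, List.singleton_prefix_iff_head?_eq_some, Option.mem_def]
  grind

lemma Active.append_cons (hl : Active D Z (l ++ [v])) (hp : Active D Z (v :: p))
    (hv : ∀ x ∈ l.getLast?, ∀ z ∈ p.head?, OpenTriple D Z x v z) : Active D Z (l ++ v :: p) := by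
  induction l with
  | nil => exact hp
  | cons x l ih =>
    rcases l with - | ⟨y, l⟩
    · exact active_cons_cons.2 ⟨hv x rfl, hp⟩
    · obtain ⟨hxy, hl⟩ := active_cons_cons.1 hl
      refine active_cons_cons.2 ⟨?_, ih hl (by simpa using hv)⟩
      simpa only [List.append_eq, List.head?_append, List.head?_cons] using hxy

lemma Active.mem_anc_or_reflTransGen (hp : Active D Z (a :: b :: p))
    (hchain : List.IsChain (SymmGen D) (b :: p)) (hab : D a b) (ht : t ∈ (b :: p).getLast?) :
    b ∈ anc D Z ∨ ReflTransGen D b t := by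
  induction p generalizing a b with
  | nil =>
    obtain rfl : b = t := by simpa using ht
    exact .inr .refl
  | cons c p ih =>
    obtain ⟨hbc, hchain⟩ := List.isChain_cons_cons.1 hchain
    obtain ⟨hopen, hp⟩ := active_cons_cons.1 hp
    rcases hbc with hbc | hcb
    · exact (ih hp hchain hbc (by simpa using ht)).imp
        (fun ⟨z, hz, hcz⟩ => ⟨z, hz, hcz.head hbc⟩) (.head hbc)
    · exact .inl ((hopen c rfl).1 ⟨hab, hcb⟩)

lemma OpenTriple.of_loop (hD : Acyclic D) (hchain : List.IsChain (SymmGen D) (v :: h :: (m ++ [v])))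
    (hloop : Active D Z (v :: h :: (m ++ [v]))) (hxh : OpenTriple D Z x v h)
    (hgz : OpenTriple D Z g v z) : OpenTriple D Z x v z := by
  constructor
  · rintro ⟨hxv, -⟩
    obtain ⟨hvh | hhv, hchain⟩ := List.isChain_cons_cons.1 hchain
    · rcases hloop.mem_anc_or_reflTransGen hchain hvh (t := v)
        (by simp [List.getLast?_cons]) with ⟨d, hd, hhd⟩ | hhv
      · exact ⟨d, hd, hhd.head hvh⟩
      · exact (hD v h hvh hhv).elim
    · exact hxh.1 ⟨hxv, hhv⟩
  · intro hxz
    by_cases hxv : D x v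
    · exact hgz.2 fun hgz => hxz ⟨hxv, hgz.2⟩
    · exact hxh.2 fun hxh => hxv hxh.1

lemma exists_eq_append_cons_append_cons_of_not_nodup (hp : ¬p.Nodup) :
    ∃ v l m q, p = l ++ v :: (m ++ v :: q) := by
  induction p with
  | nil => exact (hp List.nodup_nil).elim
  | cons x p ih =>
    by_cases hx : x ∈ p
    · obtain ⟨m, q, rfl⟩ := List.append_of_mem hx
      exact ⟨x, [], m, q, rfl⟩
    · obtain ⟨v, l, m, q, rfl⟩ := ih fun h => hp (List.nodup_cons.2 ⟨hx, h⟩)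
      exact ⟨v, x :: l, m, q, rfl⟩

lemma Active.erase_loop {q : List V} (hD : Acyclic D) (hp : Active D Z (l ++ v :: (m ++ v :: q)))
    (hchain : List.IsChain (SymmGen D) (l ++ v :: (m ++ v :: q))) : Active D Z (l ++ v :: q) := by
  refine (hp.of_infix ⟨[], m ++ v :: q, by simp⟩).append_cons
    (hp.of_infix ⟨l ++ v :: m, [], by simp⟩) fun x hx z hz => ?_
  obtain ⟨l, rfl⟩ := List.getLast?_eq_some_iff.1 hx
  obtain ⟨q, rfl⟩ := List.head?_eq_some_iff.1 hz
  rcases m with - | ⟨h, m⟩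
  · have hvv : SymmGen D v v := (List.isChain_cons_cons.1 (List.isChain_split.1 hchain).2).1
    exact (hD v v (hvv.elim id id) .refl).elim
  obtain ⟨k, g, hk⟩ : ∃ k g, h :: m = k ++ [g] := List.eq_nil_or_concat' _ |>.resolve_left (by simp)
  refine .of_loop hD (h := h) (m := m) (g := g) (hchain.infix ⟨l ++ [x], z :: q, by simp⟩)
    (hp.of_infix ⟨l ++ [x], z :: q, by simp⟩) (hp x v h ⟨l, m ++ v :: z :: q, by simp⟩)
    (hp g v z ⟨l ++ x :: v :: k, q, by simp [hk]⟩)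

lemma exists_active_isPath (hD : Acyclic D) (hchain : List.IsChain (SymmGen D) p)
    (hs : p.head? = some s) (ht : p.getLast? = some t) (hp : Active D Z p) :
    ∃ q, IsPath (SymmGen D) s t q ∧ Active D Z q := by
  induction hn : p.length using Nat.strong_induction_on generalizing p with
  | h n ih =>
    by_cases hnodup : p.Nodup
    · exact ⟨p, ⟨hchain, hs, ht, hnodup⟩, hp⟩
    obtain ⟨v, l, m, q, rfl⟩ := exists_eq_append_cons_append_cons_of_not_nodup hnodup
    have hchain' : List.IsChain (SymmGen D) (l ++ v :: q) := by
      obtain ⟨hl, hm⟩ := List.isChain_split.1 hchain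
      exact List.isChain_split.2 ⟨hl, hm.infix ⟨v :: m, [], by simp⟩⟩
    refine ih _ ?_ hchain' ?_ ?_ (hp.erase_loop hD hchain) rfl
    · simp [← hn]
    · simpa only [List.head?_append, List.head?_cons] using hs
    · simpa [List.getLast?_append, List.getLast?_cons] using ht

/-- The direction of the first edge of a walk: out of the first vertex or into it. -/
inductive FirstEdge
  | out
  | into

/-- The first edge of the walk `v :: p` has direction `d`; a walk without edges counts as leaving
its only vertex. -/
def FirstEdge.Holds (D : V → V → Prop) (v : V) (p : List V) : FirstEdge → Prop
  | out => ∀ u ∈ p.head?, D v u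
  | into => ∃ u ∈ p.head?, D u v

/-- `DConn D Z t v d` says that there is a walk from `v` to `t` that is not blocked by `Z` and whose
first edge has direction `d`. Walks are built up from their last vertex `t` and may repeat vertices:
the direction of the first edge is all that is needed to prepend another edge. -/
inductive DConn (D : V → V → Prop) (Z : Set V) (t : V) : V → FirstEdge → Prop
  | refl : DConn D Z t t .out
  | forward {w v : V} : D w v → v ∉ Z → DConn D Z t v .out → DConn D Z t w .out
  | backward {w v : V} {d : FirstEdge} : D v w → v ∉ Z → DConn D Z t v d → DConn D Z t w .into
  | collider {w v : V} : D w v → v ∈ anc D Z → DConn D Z t v .into → DConn D Z t w .out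

lemma DConn.mem_anc_of_out (h : DConn D Z t v .out) : v ∈ anc D (insert t Z) := by
  generalize hd : FirstEdge.out = d at h
  induction h with
  | refl => exact ⟨t, mem_insert t Z, .refl⟩
  | forward hwv _ _ ih =>
    obtain ⟨z, hz, hvz⟩ := ih hd
    exact ⟨z, hz, hvz.head hwv⟩
  | backward => cases hd
  | collider hwv hv _ _ =>
    obtain ⟨z, hz, hvz⟩ := hv
    exact ⟨z, mem_insert_of_mem t hz, hvz.head hwv⟩

lemma Acyclic.not_adj_symm (hD : Acyclic D) (huv : D u v) : ¬D v u := fun hvu =>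
  hD u v huv (.single hvu)

lemma DConn.exists_active {d : FirstEdge} (hD : Acyclic D) (h : DConn D Z t v d) :
    ∃ p, List.IsChain (SymmGen D) (v :: p) ∧ (v :: p).getLast? = some t ∧ Active D Z (v :: p) ∧
      d.Holds D v p := by
  induction h with
  | refl =>
    refine ⟨[], by simp, rfl, fun x y z hxyz => ?_, by simp [FirstEdge.Holds]⟩
    simpa using (interiorAt_iff_infix.1 hxyz).length_le
  | forward hwv hv _ ih =>
    obtain ⟨p, hchain, hlast, hp, hd⟩ := ih
    refine ⟨_ :: p, hchain.cons_cons (.inl hwv), hlast, active_cons_cons.2 ⟨fun u hu => ?_, hp⟩,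
      by simpa [FirstEdge.Holds] using hwv⟩
    exact ⟨fun h => (hD.not_adj_symm (hd u hu) h.2).elim, fun _ => hv⟩
  | backward hvw hv _ ih =>
    obtain ⟨p, hchain, hlast, hp, -⟩ := ih
    exact ⟨_ :: p, hchain.cons_cons (.inr hvw), hlast,
      active_cons_cons.2 ⟨fun _ _ => ⟨fun h => (hD.not_adj_symm hvw h.1).elim, fun _ => hv⟩, hp⟩,
      by simpa [FirstEdge.Holds] using hvw⟩
  | collider hwv hv _ ih =>
    obtain ⟨p, hchain, hlast, hp, u, hu, huv⟩ := ih
    refine ⟨_ :: p, hchain.cons_cons (.inl hwv), hlast, active_cons_cons.2 ⟨fun u' hu' => ?_, hp⟩,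
      by simpa [FirstEdge.Holds] using hwv⟩
    obtain rfl : u = u' := Option.mem_unique hu hu'
    exact ⟨fun _ => hv, fun h => (h ⟨hwv, huv⟩).elim⟩

lemma FirstEdge.holds_out_of_not_holds_into (hchain : List.IsChain (SymmGen D) (v :: p))
    (h : ¬into.Holds D v p) : out.Holds D v p := by
  rintro u hu
  obtain ⟨p, rfl⟩ := List.head?_eq_some_iff.1 hu
  exact (List.isChain_cons_cons.1 hchain).1.resolve_right fun huv => h ⟨u, rfl, huv⟩

lemma exists_firstEdge_holds (hchain : List.IsChain (SymmGen D) (v :: p)) :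
    ∃ d : FirstEdge, d.Holds D v p := by
  by_cases h : FirstEdge.into.Holds D v p
  exacts [⟨_, h⟩, ⟨_, FirstEdge.holds_out_of_not_holds_into hchain h⟩]

lemma dConn_of_active {d : FirstEdge} (hD : Acyclic D) (ht : t ∉ Z)
    (hchain : List.IsChain (SymmGen D) (v :: p)) (hlast : (v :: p).getLast? = some t)
    (hp : Active D Z (v :: p)) (hd : d.Holds D v p) : DConn D Z t v d := by
  induction p generalizing v d with
  | nil =>
    obtain rfl : v = t := by simpa using hlast
    cases d
    exacts [.refl, by simp [FirstEdge.Holds] at hd]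
  | cons u p ih =>
    obtain ⟨-, hchain⟩ := List.isChain_cons_cons.1 hchain
    obtain ⟨hopen, hp⟩ := active_cons_cons.1 hp
    have ih {d : FirstEdge} (hd : d.Holds D u p) := ih hchain (by simpa using hlast) hp hd
    have hu (h : ∀ x ∈ p.head?, ¬(D v u ∧ D x u)) : u ∉ Z := by
      rcases p with - | ⟨x, p⟩
      · obtain rfl : u = t := by simpa using hlast
        exact ht
      · exact (hopen x rfl).2 (h x rfl)
    cases d with
    | out =>
      have hvu : D v u := hd u rfl
      by_cases hinto : FirstEdge.into.Holds D u p
      · obtain ⟨x, hx, hxu⟩ := id hinto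
        exact .collider hvu ((hopen x hx).1 ⟨hvu, hxu⟩) (ih hinto)
      · exact .forward hvu (hu fun x hx h => hinto ⟨x, hx, h.2⟩)
          (ih (FirstEdge.holds_out_of_not_holds_into hchain hinto))
    | into =>
      have huv : D u v := by simpa [FirstEdge.Holds] using hd
      obtain ⟨d', hd'⟩ := exists_firstEdge_holds hchain
      exact .backward huv (hu fun x _ h => hD.not_adj_symm huv h.1) (ih hd')

lemma dSep_iff {S T : Set V} (hD : Acyclic D) (hTZ : Disjoint T Z) :
    DSep D S T Z ↔ ∀ s ∈ S, ∀ t ∈ T, ∀ d, ¬DConn D Z t s d := by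
  refine forall₄_congr fun s _ t ht => ⟨fun hsep d h => ?_, fun hsep p hpath => ?_⟩
  · obtain ⟨p, hchain, hlast, hp, -⟩ := h.exists_active hD
    obtain ⟨q, hq, hactive⟩ := exists_active_isPath hD hchain rfl hlast hp
    exact active_iff_not_blocked.1 hactive (hsep q hq)
  · by_contra hp
    obtain ⟨hchain, hhead, hlast, -⟩ := hpath
    obtain ⟨p, rfl⟩ := List.head?_eq_some_iff.1 hhead
    obtain ⟨d, hd⟩ := exists_firstEdge_holds hchain
    exact hsep d (dConn_of_active hD (hTZ.notMem_of_mem_left ht) hchain hlast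
      (active_iff_not_blocked.2 hp) hd)

end DSeparation

section Moralization

variable {V : Type*} {D : V → V → Prop} {Vs Z : Set V} {s t u v w : V} {d : FirstEdge}

lemma moral_adj : (moral D Vs).Adj u v ↔
    u ≠ v ∧ u ∈ Vs ∧ v ∈ Vs ∧ (D u v ∨ D v u ∨ ∃ w ∈ Vs, D u w ∧ D v w) := by
  simp only [moral, SimpleGraph.fromRel_adj]
  grind

lemma support_moral_subset : (moral D Vs).support ⊆ Vs := fun _ ⟨_, h⟩ => (moral_adj.1 h).2.1

lemma reachable_avoiding_moral (hu : u ∈ Vs) (hv : v ∈ Vs) (huZ : u ∉ Z) (hvZ : v ∉ Z)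
    (h : D u v ∨ D v u ∨ ∃ w ∈ Vs, D u w ∧ D v w) : (avoiding (moral D Vs) Z).Reachable u v := by
  rcases eq_or_ne u v with rfl | huv
  · rfl
  · exact (avoiding_adj.2 ⟨moral_adj.2 ⟨huv, hu, hv, h⟩, huZ, hvZ⟩).reachable

lemma DConn.reachable_moral (hVs : anc D Vs ⊆ Vs) (hZ : Z ⊆ Vs) (ht : t ∈ Vs) (hv : v ∈ Vs)
    (hvZ : v ∉ Z) (h : DConn D Z t v d) : (avoiding (moral D Vs) Z).Reachable v t := by
  have mem_of_adj {a b} (hab : D a b) (hb : b ∈ Vs) : a ∈ Vs := hVs ⟨b, hb, .single hab⟩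
  -- At a collider the moral graph skips `v` and uses the edge between its two parents.
  suffices v ∈ Vs → ∀ u ∈ Vs, u ∉ Z → (u = v ∨ d = .into ∧ D u v) →
      (avoiding (moral D Vs) Z).Reachable u t from this hv v hv hvZ (.inl rfl)
  clear hv hvZ
  induction h with
  | refl => rintro - u - - (rfl | ⟨⟨⟩, -⟩); rfl
  | @forward w v hwv hvZ hv ih =>
    rintro hw u - huZ (rfl | ⟨⟨⟩, -⟩)
    obtain ⟨z, hz, hvz⟩ := hv.mem_anc_of_out
    have hv : v ∈ Vs := hVs ⟨z, insert_subset ht hZ hz, hvz⟩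
    exact (reachable_avoiding_moral hw hv huZ hvZ (.inl hwv)).trans (ih hv v hv hvZ (.inl rfl))
  | @backward w v d hvw hvZ _ ih =>
    intro hw u hu huZ huw
    have hv := mem_of_adj hvw hw
    refine (reachable_avoiding_moral hu hv huZ hvZ ?_).trans (ih hv v hv hvZ (.inl rfl))
    rcases huw with rfl | ⟨-, huw⟩
    exacts [.inr (.inl hvw), .inr (.inr ⟨w, hw, huw, hvw⟩)]
  | @collider w v hwv hv _ ih =>
    rintro hw u - huZ (rfl | ⟨⟨⟩, -⟩)
    obtain ⟨z, hz, hvz⟩ := hv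
    exact ih (hVs ⟨z, hZ hz, hvz⟩) u hw huZ (.inr ⟨rfl, hwv⟩)

lemma DConn.of_reflTransGen (hvw : ReflTransGen D v w) (hv : v ∉ anc D Z)
    (h : DConn D Z t w .out) : DConn D Z t v .out := by
  induction hvw using ReflTransGen.head_induction_on with
  | refl => exact h
  | @head a b hab _ ih =>
    have hb : b ∉ anc D Z := fun ⟨z, hz, hbz⟩ => hv ⟨z, hz, hbz.head hab⟩
    exact .forward hab (fun hbZ => hb ⟨b, hbZ, .refl⟩) (ih hb)

lemma DConn.exists_of_reflTransGen (hvw : ReflTransGen D v w) (hv : v ∉ anc D Z)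
    (h : DConn D Z t v d) : ∃ d', DConn D Z t w d' := by
  induction hvw with
  | refl => exact ⟨d, h⟩
  | @tail a b hva hab ih =>
    obtain ⟨d', ha⟩ := ih
    exact ⟨.into, .backward hab (fun haZ => hv ⟨a, haZ, hva⟩) ha⟩

-- From a collider `v` that is not an ancestor of `Z` one can walk down to `t` or to `s` without
-- meeting `Z`.
lemma DConn.exists_or_forall_out (hv : v ∈ anc D ({s, t} ∪ Z)) (h : DConn D Z t v .into) :
    (∃ d, DConn D Z t s d) ∨ ∀ w, D w v → DConn D Z t w .out := by
  by_cases hvZ : v ∈ anc D Z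
  · exact .inr fun w hwv => .collider hwv hvZ h
  obtain ⟨z, (rfl | rfl) | hz, hvz⟩ := hv
  · exact .inl (h.exists_of_reflTransGen hvz hvZ)
  · have hv : v ∉ Z := fun hv => hvZ ⟨v, hv, .refl⟩
    exact .inr fun w hwv => .forward hwv hv (DConn.refl.of_reflTransGen hvz hvZ)
  · exact (hvZ ⟨z, hz, hvz⟩).elim

lemma exists_dConn_of_reachable_moral (hVs : Vs ⊆ anc D ({s, t} ∪ Z))
    (h : (avoiding (moral D Vs) Z).Reachable s t) : ∃ d, DConn D Z t s d := by
  suffices ∀ u, ReflTransGen (avoiding (moral D Vs) Z).Adj u t →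
      (∃ d, DConn D Z t s d) ∨ ∃ d, DConn D Z t u d from
    (this s ((SimpleGraph.reachable_iff_reflTransGen s t).1 h)).elim id id
  intro u hut
  induction hut using ReflTransGen.head_induction_on with
  | refl => exact .inr ⟨_, .refl⟩
  | @head a b hab _ ih =>
    obtain ⟨hab, -, hbZ⟩ := avoiding_adj.1 hab
    obtain ⟨-, -, hb, hab⟩ := moral_adj.1 hab
    refine ih.elim .inl fun ⟨d, hbt⟩ => ?_
    rcases hab with hab | hba | ⟨c, hc, hac, hbc⟩
    · cases d with
      | out => exact .inr ⟨_, .forward hab hbZ hbt⟩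
      | into => exact (hbt.exists_or_forall_out (hVs hb)).imp_right fun h => ⟨_, h a hab⟩
    · exact .inr ⟨_, .backward hba hbZ hbt⟩
    · have hct : DConn D Z t c .into := .backward hbc hbZ hbt
      exact (hct.exists_or_forall_out (hVs hc)).imp_right fun h => ⟨_, h a hac⟩

end Moralization

section ProperBackdoorGraph

variable {V : Type*} {D : V → V → Prop} {A Y t v w : V} {W Z : Set V} {d : FirstEdge}

lemma anc_mono {W W' : Set V} (h : W ⊆ W') : anc D W ⊆ anc D W' :=
  fun _ ⟨w, hw, hvw⟩ => ⟨w, h hw, hvw⟩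

lemma Acyclic.pbd (hD : Acyclic D) : Acyclic (pbd D A Y) :=
  fun u v huv hvu => hD u v huv.1 (ReflTransGen.mono (fun _ _ h => h.1) _ _ hvu)

lemma reflTransGen_pbd_or (h : ReflTransGen D v w) :
    ReflTransGen (pbd D A Y) v w ∨ w ∈ desc D (cn D A Y) ∧ ReflTransGen (pbd D A Y) v A := by
  induction h with
  | refl => exact .inl .refl
  | @tail b c _ hbc ih =>
    rcases ih with hvb | ⟨⟨a, ha, hab⟩, hvA⟩
    · by_cases hdel : b = A ∧ c ∈ cn D A Y
      · exact .inr ⟨⟨c, hdel.2, .refl⟩, hdel.1 ▸ hvb⟩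
      · exact .inl (hvb.tail ⟨hbc, hdel⟩)
    · exact .inr ⟨⟨a, ha, hab.tail hbc⟩, hvA⟩

lemma anc_subset_anc_pbd_of_mem (hA : A ∈ W) : anc D W ⊆ anc (pbd D A Y) W :=
  fun _ ⟨w, hw, hvw⟩ => (reflTransGen_pbd_or hvw).elim (fun h => ⟨w, hw, h⟩) fun h => ⟨A, hA, h.2⟩

lemma anc_subset_anc_pbd_of_disjoint (hW : Disjoint W (desc D (cn D A Y))) :
    anc D W ⊆ anc (pbd D A Y) W := fun _ ⟨w, hw, hvw⟩ =>
  (reflTransGen_pbd_or hvw).elim (fun h => ⟨w, hw, h⟩) fun h => (hW.notMem_of_mem_left hw h.1).elim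

lemma notMem_of_disjoint_desc_of_mem_anc {S : Set V} (hW : Disjoint W (desc D S))
    (hv : v ∈ anc D W) : v ∉ desc D S := fun ⟨s, hs, hsv⟩ => by
  obtain ⟨w, hw, hvw⟩ := hv
  exact hW.notMem_of_mem_left hw ⟨s, hs, hsv.trans hvw⟩

lemma Acyclic.notMem_desc_cn (hD : Acyclic D) : A ∉ desc D (cn D A Y) := by
  rintro ⟨c, ⟨hcA, hAc, -⟩, hcA'⟩
  obtain rfl | ⟨b, hAb, hbc⟩ := hAc.cases_head
  exacts [hcA rfl, hD A b hAb (hbc.trans hcA')]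

lemma DConn.pbd_of_mem (hA : A ∈ Z) (hv : v ≠ A) (h : DConn D Z t v d) :
    DConn (pbd D A Y) Z t v d := by
  suffices DConn (pbd D A Y) Z t v d ∨ v = A ∧ d = .out from
    this.resolve_right fun h => hv h.1
  clear hv
  have ne_A {v} (hvZ : v ∉ Z) : v ≠ A := fun h => hvZ (h ▸ hA)
  induction h with
  | refl => exact .inl .refl
  | @forward w v hwv hvZ _ ih =>
    refine or_iff_not_imp_right.2 fun hw => ?_
    have hv := ih.resolve_right fun h => ne_A hvZ h.1
    exact .forward ⟨hwv, fun h => hw ⟨h.1, rfl⟩⟩ hvZ hv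
  | @backward w v d hvw hvZ _ ih =>
    have hv := ih.resolve_right fun h => ne_A hvZ h.1
    exact .inl (.backward ⟨hvw, fun h => ne_A hvZ h.1⟩ hvZ hv)
  | @collider w v hwv hv _ ih =>
    refine or_iff_not_imp_right.2 fun hw => ?_
    have hvt := ih.resolve_right (by simp)
    exact .collider ⟨hwv, fun h => hw ⟨h.1, rfl⟩⟩ (anc_subset_anc_pbd_of_mem hA hv) hvt

-- A walk that enters the descendants of `cn` cannot leave them before it reaches a collider or its
-- end, both of which have to be ancestors of `insert t Z`.
lemma DConn.pbd_of_disjoint (hZ : Disjoint (insert t Z) (desc D (cn D A Y)))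
    (hv : v ∉ desc D (cn D A Y)) (h : DConn D Z t v d) : DConn (pbd D A Y) Z t v d := by
  suffices v ∈ desc D (cn D A Y) ∧ d = .into ∨ DConn (pbd D A Y) Z t v d from
    this.resolve_left fun h => hv h.1
  clear hv
  have hZ' : Disjoint Z (desc D (cn D A Y)) := hZ.mono_left (subset_insert t Z)
  have adj_pbd {a b} (hab : D a b) (hb : b ∉ desc D (cn D A Y)) : pbd D A Y a b :=
    ⟨hab, fun h => hb ⟨b, h.2, .refl⟩⟩
  induction h with
  | refl => exact .inr .refl
  | @forward w v hwv hvZ hv ih =>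
    have hv := notMem_of_disjoint_desc_of_mem_anc hZ hv.mem_anc_of_out
    exact .inr (.forward (adj_pbd hwv hv) hvZ (ih.resolve_left fun h => hv h.1))
  | @backward w v d hvw hvZ _ ih =>
    refine or_iff_not_imp_left.2 fun hw => ?_
    have hw : w ∉ desc D (cn D A Y) := fun h => hw ⟨h, rfl⟩
    have hv : v ∉ desc D (cn D A Y) := fun ⟨c, hc, hcv⟩ => hw ⟨c, hc, hcv.tail hvw⟩
    exact .backward (adj_pbd hvw hw) hvZ (ih.resolve_left fun h => hv h.1)
  | @collider w v hwv hv _ ih =>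
    have hv' := notMem_of_disjoint_desc_of_mem_anc hZ' hv
    exact .inr (.collider (adj_pbd hwv hv') (anc_subset_anc_pbd_of_disjoint hZ' hv)
      (ih.resolve_left fun h => hv' h.1))

end ProperBackdoorGraph

section AdjustmentEfficiencyGraph

variable {V : Type*} {D : V → V → Prop} {A Y : V} {L N Z : Set V} {t u v x : V} {d : FirstEdge}

lemma mem_H1verts : x ∈ H1verts D A Y L N ↔
    x ∈ ancAYL D A Y L ∧ (x = A ∨ x = Y ∨ x ∈ N ∧ x ∉ forb D A Y) := by
  simp only [H1verts, Ignore, mem_sdiff, mem_inter_iff, mem_union, mem_univ, mem_insert_iff,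
    mem_singleton_iff]
  tauto

lemma subset_ancAYL : {A, Y} ∪ L ⊆ ancAYL D A Y L := fun x hx => ⟨x, hx, .refl⟩

lemma anc_pbd_ancAYL_subset : anc (pbd D A Y) (ancAYL D A Y L) ⊆ ancAYL D A Y L :=
  fun _ ⟨_, ⟨w, hw, hvw⟩, huv⟩ => ⟨w, hw, (ReflTransGen.mono (fun _ _ h => h.1) _ _ huv).trans hvw⟩

lemma H1_adj : (H1 D A Y L N).Adj u v ↔ u ≠ v ∧ u ∈ H1verts D A Y L N ∧ v ∈ H1verts D A Y L N ∧
    ((eliminate (H0 D A Y L) (Ignore D A Y L N)).Adj u v ∨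
      (u = A ∨ u = Y) ∧ v ∈ L ∨ (v = A ∨ v = Y) ∧ u ∈ L) := by
  have hpath (u v : V) (huv : u ≠ v) (hu : u ∈ H1verts D A Y L N) (hv : v ∈ H1verts D A Y L N) :
      (∃ p, IsPath (H0 D A Y L).Adj u v p ∧ ∀ x ∈ p, x ≠ u → x ≠ v → x ∈ Ignore D A Y L N) ↔
        (eliminate (H0 D A Y L) (Ignore D A Y L N)).Adj u v := by
    have hcc := mem_cc_iff_reachable (H := H0 D A Y L) (W := (Ignore D A Y L N ∪ {u, v})ᶜ)
      (u := u) (v := v) (by simp)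
    simp only [eliminate, huv, hu.2, hv.2, ← hcc, cc, mem_ofPred_eq, not_false_eq_true, true_and,
      ne_eq]
    refine exists_congr fun p => and_congr_right fun _ => forall₂_congr fun x _ => ?_
    simp only [mem_compl_iff, not_not, mem_union, mem_insert_iff, mem_singleton_iff]
    tauto
  have hsymm := (eliminate (H0 D A Y L) (Ignore D A Y L N)).adj_comm u v
  rw [H1, SimpleGraph.fromRel_adj]
  grind

lemma support_H1_subset : (H1 D A Y L N).support ⊆ H1verts D A Y L N :=
  fun _ ⟨_, h⟩ => (H1_adj.1 h).2.1

lemma eliminate_le_H1 : eliminate (H0 D A Y L) (Ignore D A Y L N) ≤ H1 D A Y L N := fun u v h => by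
  have mem_of_adj {u v} (h : (eliminate (H0 D A Y L) (Ignore D A Y L N)).Adj u v) :
      u ∈ H1verts D A Y L N :=
    sdiff_subset_sdiff_left support_moral_subset (support_eliminate_subset ⟨v, h⟩)
  exact H1_adj.2 ⟨h.ne, mem_of_adj h, mem_of_adj h.symm, .inl h⟩

lemma reachable_avoiding_H1 (hu : u ∈ H1verts D A Y L N) (hv : v ∈ H1verts D A Y L N) (huZ : u ∉ Z)
    (h : (avoiding (H0 D A Y L) Z).Reachable u v) : (avoiding (H1 D A Y L N) Z).Reachable u v :=
  (reachable_avoiding_eliminate hu.2 hv.2 huZ h).mono <|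
    avoiding_le_avoiding (fun _ _ h _ _ => eliminate_le_H1 h) subset_rfl

lemma reachable_avoiding_H0 (hL : L ⊆ Z) (hZ : Disjoint (Ignore D A Y L N) Z)
    (h : (avoiding (H1 D A Y L N) Z).Reachable u v) : (avoiding (H0 D A Y L) Z).Reachable u v := by
  refine reachable_avoiding_of_eliminate hZ (h.mono ?_)
  refine avoiding_le_avoiding (fun a b hab ha hb => ?_) subset_rfl
  obtain ⟨-, -, -, hab | ⟨-, hbL⟩ | ⟨-, haL⟩⟩ := H1_adj.1 hab
  exacts [hab, (hb (hL hbL)).elim, (ha (hL haL)).elim]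

lemma DConn.reachable_H1 (hZ : Z ⊆ ancAYL D A Y L) (ht : t ∈ H1verts D A Y L N)
    (hv : v ∈ H1verts D A Y L N) (hvZ : v ∉ Z) (h : DConn (pbd D A Y) Z t v d) :
    (avoiding (H1 D A Y L N) Z).Reachable v t :=
  reachable_avoiding_H1 hv ht hvZ (h.reachable_moral anc_pbd_ancAYL_subset hZ ht.1 hv.1 hvZ)

end AdjustmentEfficiencyGraph

section AdjustmentSets

variable {V : Type*} {D : V → V → Prop} {A Y : V} {L N Z O : Set V}

lemma left_mem_H1verts : A ∈ H1verts D A Y L N :=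
  mem_H1verts.2 ⟨subset_ancAYL (by simp), .inl rfl⟩

lemma right_mem_H1verts : Y ∈ H1verts D A Y L N :=
  mem_H1verts.2 ⟨subset_ancAYL (by simp), .inr (.inl rfl)⟩

lemma left_mem_forb : A ∈ forb D A Y := .inr rfl

lemma right_mem_forb (hAY : A ≠ Y) (h : ReflTransGen D A Y) : Y ∈ forb D A Y :=
  .inl ⟨Y, ⟨hAY.symm, h, .refl⟩, .refl⟩

lemma IsCut.subset_and_disjoint_forb (hZ : IsCut (H1verts D A Y L N) (H1 D A Y L N) A Y Z) :
    Z ⊆ N ∧ Disjoint Z (forb D A Y) := by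
  obtain ⟨hsub, hA, hY, -⟩ := isCut_iff.1 hZ
  have h {z} (hz : z ∈ Z) : z ∈ N ∧ z ∉ forb D A Y := by
    obtain ⟨-, rfl | rfl | h⟩ := mem_H1verts.1 (hsub hz)
    exacts [(hA hz).elim, (hY hz).elim, h]
  exact ⟨fun z hz => (h hz).1, disjoint_left.2 fun z hz => (h hz).2⟩

lemma GAC.isCut (hD : Acyclic D) (hAY : A ≠ Y) (hAancY : ReflTransGen D A Y)
    (hZ : GAC D A Y L N Z) :
    IsCut (H1verts D A Y L N) (H1 D A Y L N) A Y (Z ∩ H1verts D A Y L N) := by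
  obtain ⟨hsep, hforb, hL, hN⟩ := hZ
  rw [← disjoint_iff_inter_eq_empty] at hforb
  have hA : A ∉ Z := hforb.notMem_of_mem_right left_mem_forb
  have hY : Y ∉ Z := hforb.notMem_of_mem_right (right_mem_forb hAY hAancY)
  have hIgnore : Disjoint (Ignore D A Y L N) Z := disjoint_left.2 fun z hz hzZ =>
    hz.2.elim (fun h => h.2 (hN hzZ)) (hforb.notMem_of_mem_left hzZ)
  refine isCut_iff.2 ⟨inter_subset_right, fun h => hA h.1, fun h => hY h.1, fun hcc => ?_⟩
  rw [mem_cc_iff_reachable fun h => hY h.1,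
    avoiding_inter_of_support_subset support_H1_subset] at hcc
  have hanc : ancAYL D A Y L ⊆ anc (pbd D A Y) ({A, Y} ∪ Z) :=
    (anc_subset_anc_pbd_of_mem (by simp)).trans (anc_mono (union_subset_union_right _ hL))
  obtain ⟨d, hd⟩ := exists_dConn_of_reachable_moral hanc (reachable_avoiding_H0 hL hIgnore hcc.symm)
  exact (dSep_iff hD.pbd (disjoint_singleton_left.2 hY)).1 hsep A rfl Y rfl d hd

lemma IsCut.gac (hD : Acyclic D) (hAY : A ≠ Y) (hAancY : ReflTransGen D A Y)
    (hLforb : Disjoint L (forb D A Y)) (hLN : L ⊆ N)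
    (hZ : IsCut (H1verts D A Y L N) (H1 D A Y L N) A Y Z) : GAC D A Y L N Z := by
  obtain ⟨hZN, hforb⟩ := hZ.subset_and_disjoint_forb
  obtain ⟨hsub, hA, hY, hsep⟩ := isCut_iff.1 hZ
  rw [mem_cc_iff_reachable hY] at hsep
  refine ⟨(dSep_iff hD.pbd (disjoint_singleton_left.2 hY)).2 ?_, hforb.inter_eq, fun l hl => ?_,
    hZN⟩
  · rintro _ rfl _ rfl d hd
    exact hsep
      (hd.reachable_H1 (hsub.trans sdiff_subset) right_mem_H1verts left_mem_H1verts hA).symm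
  · by_contra hlZ
    have hlforb := hLforb.notMem_of_mem_left hl
    have hlv : l ∈ H1verts D A Y L N :=
      mem_H1verts.2 ⟨subset_ancAYL (.inr hl), .inr (.inr ⟨hLN hl, hlforb⟩)⟩
    have hYl : (H1 D A Y L N).Adj Y l := H1_adj.2
      ⟨fun h => hlforb (h ▸ right_mem_forb hAY hAancY), right_mem_H1verts, hlv, by simp [hl]⟩
    have hlA : (H1 D A Y L N).Adj l A := H1_adj.2
      ⟨fun h => hlforb (h ▸ left_mem_forb), hlv, left_mem_H1verts, by simp [hl]⟩
    exact hsep ((avoiding_adj.2 ⟨hYl, hY, hlZ⟩).reachable.trans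
      (avoiding_adj.2 ⟨hlA, hlZ, hA⟩).reachable)

lemma minimumGAC_iff_minimumCut [Finite V] (hD : Acyclic D) (hAY : A ≠ Y)
    (hAancY : ReflTransGen D A Y) (hLforb : Disjoint L (forb D A Y)) (hLN : L ⊆ N) :
    MinimumGAC D A Y L N Z ↔ MinimumCut (H1verts D A Y L N) (H1 D A Y L N) A Y Z := by
  constructor
  · rintro ⟨hZ, hmin⟩
    have hcut := hZ.isCut hD hAY hAancY
    have hZeq : Z ∩ H1verts D A Y L N = Z :=
      eq_of_subset_of_ncard_le inter_subset_left (hmin _ (hcut.gac hD hAY hAancY hLforb hLN))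
    exact ⟨hZeq ▸ hcut, fun Z' hZ' => hmin Z' (hZ'.gac hD hAY hAancY hLforb hLN)⟩
  · rintro ⟨hZ, hmin⟩
    exact ⟨hZ.gac hD hAY hAancY hLforb hLN, fun Z' hZ' =>
      (hmin _ (hZ'.isCut hD hAY hAancY)).trans (ncard_le_ncard inter_subset_left)⟩

lemma TLE.dSep_right (hD : Acyclic D) (hAY : A ≠ Y)
    (hO : IsCut (H1verts D A Y L N) (H1 D A Y L N) A Y O)
    (hZ : IsCut (H1verts D A Y L N) (H1 D A Y L N) A Y Z) (h : TLE (H1 D A Y L N) A Y O Z) :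
    DSep D {Y} (Z \ O) ({A} ∪ O) := by
  obtain ⟨hOsub, -, hYO, -⟩ := isCut_iff.1 hO
  obtain ⟨hZsub, hAZ, -, -⟩ := isCut_iff.1 hZ
  have hdisj : Disjoint (Z \ O) ({A} ∪ O) :=
    disjoint_union_right.2 ⟨disjoint_singleton_right.2 fun h => hAZ h.1, disjoint_sdiff_left⟩
  have hsub : {A} ∪ O ⊆ ancAYL D A Y L :=
    union_subset (singleton_subset_iff.2 (subset_ancAYL (by simp))) (hOsub.trans sdiff_subset)
  refine (dSep_iff hD hdisj).2 ?_
  rintro _ rfl z hz d hd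
  have hreach := (hd.pbd_of_mem (by simp) hAY.symm).reachable_H1 hsub (hZsub hz.1)
    right_mem_H1verts (by simp [hAY.symm, hYO])
  exact uSep_singleton_left_iff.1 h.1 z hz ((mem_cc_iff_reachable hYO).2 (hreach.mono
    (avoiding_le_avoiding (fun _ _ h _ _ => h) subset_union_right)))

lemma TLE.dSep_left (hD : Acyclic D) (hO : IsCut (H1verts D A Y L N) (H1 D A Y L N) A Y O)
    (hZ : IsCut (H1verts D A Y L N) (H1 D A Y L N) A Y Z) (h : TLE (H1 D A Y L N) A Y O Z) :
    DSep D {A} (O \ Z) Z := by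
  obtain ⟨hZsub, hAZ, -, -⟩ := isCut_iff.1 hZ
  refine (dSep_iff hD disjoint_sdiff_left).2 ?_
  rintro A rfl o ho d hd
  have hdisj : Disjoint (insert o Z) (forb D A Y) := disjoint_insert_left.2
    ⟨hO.subset_and_disjoint_forb.2.notMem_of_mem_left ho.1, hZ.subset_and_disjoint_forb.2⟩
  have hreach := (hd.pbd_of_disjoint (hdisj.mono_right subset_union_left)
    hD.notMem_desc_cn).reachable_H1 (hZsub.trans sdiff_subset) ((isCut_iff.1 hO).1 ho.1)
    left_mem_H1verts hAZ
  exact uSep_singleton_left_iff.1 h.2 o ho ((mem_cc_iff_reachable hAZ).2 hreach)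

theorem stmt13_general [Finite V] (hD : Acyclic D) (hAY : A ≠ Y) (hAancY : ReflTransGen D A Y)
    (hadm : Admissible D A Y L N) :
    ∃ Om : Set V, MinimumGAC D A Y L N Om ∧ ∀ Z, MinimumGAC D A Y L N Z →
      TLE (H1 D A Y L N) A Y Om Z ∧ DSep D {Y} (Z \ Om) ({A} ∪ Om) ∧ DSep D {A} (Om \ Z) Z := by
  obtain ⟨Z₀, hZ₀⟩ := hadm
  have hLforb : Disjoint L (forb D A Y) :=
    (disjoint_iff_inter_eq_empty.2 hZ₀.2.1).mono_left hZ₀.2.2.1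
  have hLN : L ⊆ N := hZ₀.2.2.1.trans hZ₀.2.2.2
  have hmin {Z} : MinimumGAC D A Y L N Z ↔ MinimumCut (H1verts D A Y L N) (H1 D A Y L N) A Y Z :=
    minimumGAC_iff_minimumCut hD hAY hAancY hLforb hLN
  obtain ⟨O, hO, hleast⟩ :=
    exists_minimumCut_tle support_H1_subset ⟨_, hZ₀.isCut hD hAY hAancY⟩
  refine ⟨O, hmin.2 hO, fun Z hZ => ?_⟩
  have hOZ := hleast Z (hmin.1 hZ)
  exact ⟨hOZ, hOZ.dSep_right hD hAY hO.1 (hmin.1 hZ).1, hOZ.dSep_left hD hO.1 (hmin.1 hZ).1⟩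

end AdjustmentSets

/-- Theorem 2, part 3 (statement 13): if `(L, N)` is admissible, there exists a
minimum set `O_m` satisfying the graphical adjustment criterion such that for every
minimum set `Z` satisfying the criterion, `O_m ⊴_{H¹} Z`,
`Y ⊥⊥_G Z \ O_m | {A} ∪ O_m` and `A ⊥⊥_G O_m \ Z | Z`. -/
theorem stmt13 {V : Type*} [Fintype V] [DecidableEq V]
    (D : V → V → Prop) (hacy : Acyclic D)
    (A Y : V) (L N : Set V)
    (hAY : A ≠ Y) (hAancY : Relation.ReflTransGen D A Y)
    (hLnd : L ∩ desc D {A} = ∅) (hLY : Y ∉ L)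
    (hN : {A, Y} ∪ L ⊆ N)
    (hadm : Admissible D A Y L N) :
    ∃ Om : Set V, MinimumGAC D A Y L N Om ∧
      ∀ Z, MinimumGAC D A Y L N Z →
        TLE (H1 D A Y L N) A Y Om Z ∧
        DSep D {Y} (Z \ Om) ({A} ∪ Om) ∧
        DSep D {A} (Om \ Z) Z :=
  stmt13_general hacy hAY hAancY hadm

end CausalGraph
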